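/- Let n be a positive integer such that the set A_n of nontrivial small divisors of n is in arithmetic progression. Then (writing p, q, r for primes) n is of one of the following forms: n = 1; n = p; n = p^2; n = p^3; n = p^4; n = p^5; n = p^6; n = pq with p < q; n = pq^2 with p < q; n = p^2 q with p < q; n = pqr with p < q < r and 2q = p + r; n = 24; n = 36; or n = 60. -/

import Mathlib

/-- The set of nontrivial small divisors of `n`:
divisors `d` of `n` with `1 < d < √n` (equivalently `d ^ 2 < n`). -/
def A (n : ℕ) : Finset ℕ := n.divisors.filter (fun d => 1 < d ∧ d ^ 2 < n)

/-- A finite set `S` of positive integers is in arithmetic progression if there are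
positive integers `d` (first term) and `a` (common difference) with
`S = {d + i·a : 0 ≤ i ≤ |S| − 1}`. -/
def IsAP (S : Finset ℕ) : Prop :=
  ∃ d a : ℕ, 0 < d ∧ 0 < a ∧ S = (Finset.range S.card).image (fun i => d + i * a)

/-! Counting divisors in pairs `{d, n / d}` shows that `n` has at most `2 |A n| + 3` divisors, so
`|A n| ≤ 2` leaves only numbers with at most seven divisors, which the multiplicativity of the
divisor function classifies.

If `A n = {p, p + a, p + 2 a, …}` has at least three elements, then `p` is the least prime factor
of `n`, `p ∤ a`, and `q = p + a` is prime. When the progression has at most `p` terms,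
`r = p + 2 a` is prime as well and `p q` is not a term; hence `p q r ∣ n ≤ (p q) ^ 2`, and this
forces `n = p q r`. Otherwise `p + p a = p (1 + a)` is a term, which forces `a = p - 1`; then
`a ≤ 2`, since for `a ≥ 3` the number `(p - 2) ^ 2` would be a term, although `p - 2` is too small
to divide `n`. For the two progressions `2, 3, 4, …` and `3, 5, 7, …`, the last three terms
`x, y, z` satisfy `x y z ∣ 2 n`, while `p y` or `p z` is a divisor of `n` beyond the last term, so
that `x y z ≤ 2 n ≤ 2 (p z) ^ 2` and only finitely many cases remain. -/

section SmallDivisors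

variable {n d e x : ℕ}

lemma mem_A : d ∈ A n ↔ d ∣ n ∧ 1 < d ∧ d ^ 2 < n := by
  simp only [A, Finset.mem_filter, Nat.mem_divisors]
  exact ⟨fun h => ⟨h.1.1, h.2⟩, fun h => ⟨⟨h.1, by omega⟩, h.2⟩⟩

lemma mem_A_mul_of_lt (hd : 1 < d) (hde : d < e) : d ∈ A (d * e) :=
  mem_A.2 ⟨dvd_mul_right d e, hd, by nlinarith⟩

lemma mem_A_of_dvd (hx : x ∈ A n) (hdx : d ∣ x) (hd : 1 < d) : d ∈ A n := by
  obtain ⟨hxn, hx1, hxsq⟩ := mem_A.1 hx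
  have hle : d ≤ x := Nat.le_of_dvd (by omega) hdx
  exact mem_A.2 ⟨hdx.trans hxn, hd, (Nat.pow_le_pow_left hle 2).trans_lt hxsq⟩

lemma pos_of_mem_A (hx : x ∈ A n) : 0 < n :=
  (Nat.zero_le _).trans_lt (mem_A.1 hx).2.2

lemma le_sq_of_notMem_A (hdn : d ∣ n) (hd : 1 < d) (hdA : d ∉ A n) : n ≤ d ^ 2 :=
  not_lt.1 fun hlt => hdA (mem_A.2 ⟨hdn, hd, hlt⟩)

lemma prime_of_mem_A (hx : x ∈ A n) (h : ∀ y ∈ A n, y ∣ x → y = x) : x.Prime := by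
  have hx1 : 1 < x := (mem_A.1 hx).2.1
  refine Nat.prime_def.2 ⟨hx1, fun d hd => or_iff_not_imp_left.2 fun hd1 => ?_⟩
  have hd0 : 0 < d := Nat.pos_of_dvd_of_pos hd (by omega)
  exact h d (mem_A_of_dvd hx hd (by omega)) hd

lemma card_divisors_le_two_mul_card_A_add_three (n : ℕ) : n.divisors.card ≤ 2 * (A n).card + 3 := by
  have hsub : n.divisors ⊆ ({1, n, n.sqrt} : Finset ℕ) ∪ (A n ∪ (A n).image (n / ·)) := by
    intro d hd
    obtain ⟨⟨e, rfl⟩, hne⟩ := Nat.mem_divisors.1 hd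
    obtain ⟨hd0, he0⟩ : d ≠ 0 ∧ e ≠ 0 := mul_ne_zero_iff.1 hne
    simp only [Finset.mem_union, Finset.mem_insert, Finset.mem_singleton, Finset.mem_image]
    rcases eq_or_ne d 1 with rfl | hd1
    · simp
    rcases eq_or_ne e 1 with rfl | he1
    · simp
    rcases lt_trichotomy d e with hlt | rfl | hgt
    · exact .inr (.inl (mem_A_mul_of_lt (by omega) hlt))
    · simp [Nat.sqrt_eq]
    · refine .inr (.inr ⟨e, ?_, Nat.mul_div_cancel d (by omega)⟩)
      exact mul_comm e d ▸ mem_A_mul_of_lt (by omega) hgt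
  have hunion := (Finset.card_le_card hsub).trans (Finset.card_union_le _ _)
  calc n.divisors.card
      ≤ ({1, n, n.sqrt} : Finset ℕ).card + ((A n).card + ((A n).image (n / ·)).card) :=
        hunion.trans (Nat.add_le_add_left (Finset.card_union_le _ _) _)
    _ ≤ 3 + ((A n).card + (A n).card) :=
        Nat.add_le_add Finset.card_le_three (Nat.add_le_add_left Finset.card_image_le _)
    _ = 2 * (A n).card + 3 := by ring

end SmallDivisors

section DivisorCount

variable {n : ℕ}

lemma exists_prime_pow_mul_card_divisors (h0 : n ≠ 0) (h1 : n ≠ 1) :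
    ∃ p k m, p.Prime ∧ m ≠ 0 ∧ ¬ p ∣ m ∧ n = p ^ (k + 1) * m ∧
      n.divisors.card = (k + 2) * m.divisors.card := by
  have hp : n.minFac.Prime := Nat.minFac_prime h1
  obtain ⟨k, m, hpm, hn⟩ := Nat.exists_eq_pow_mul_and_not_dvd h0 n.minFac hp.ne_one
  have hk : k ≠ 0 := by
    rintro rfl
    have hnm : n = m := by simpa using hn
    exact hpm (hnm ▸ n.minFac_dvd)
  obtain ⟨k, rfl⟩ := Nat.exists_eq_succ_of_ne_zero hk
  have hcop : (n.minFac ^ (k + 1)).Coprime m :=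
    (hp.coprime_iff_not_dvd.2 hpm).pow_left _
  refine ⟨n.minFac, k, m, hp, fun hm => hpm (hm ▸ dvd_zero _), hpm, hn, ?_⟩
  calc n.divisors.card = (n.minFac ^ (k + 1) * m).divisors.card := by rw [← hn]
    _ = (k + 2) * m.divisors.card := by
        rw [hcop.card_divisors_mul, Nat.divisors_prime_pow hp, Finset.card_map, Finset.card_range]

lemma one_lt_card_divisors (h0 : n ≠ 0) (h1 : n ≠ 1) : 1 < n.divisors.card :=
  Finset.one_lt_card.2 ⟨1, Nat.one_mem_divisors.2 h0, n, Nat.mem_divisors_self n h0, h1.symm⟩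

lemma exists_eq_prime_pow_of_card_divisors_le_three (h0 : n ≠ 0) (h1 : n ≠ 1)
    (h : n.divisors.card ≤ 3) : ∃ p k, p.Prime ∧ n = p ^ (k + 1) ∧ n.divisors.card = k + 2 := by
  obtain ⟨p, k, m, hp, hm0, -, hn, hcard⟩ := exists_prime_pow_mul_card_divisors h0 h1
  obtain rfl : m = 1 := by
    by_contra hm1
    have hm : 1 < m.divisors.card := one_lt_card_divisors hm0 hm1
    nlinarith
  exact ⟨p, k, hp, by simpa using hn, by simpa using hcard⟩

lemma eq_one_or_prime_pow_or_two_primes_of_card_divisors_le_seven (h0 : n ≠ 0)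
    (h : n.divisors.card ≤ 7) :
    n = 1 ∨ (∃ p k, p.Prime ∧ k < 6 ∧ n = p ^ (k + 1)) ∨
      ∃ p q, p.Prime ∧ q.Prime ∧ p < q ∧ (n = p * q ∨ n = p * q ^ 2 ∨ n = p ^ 2 * q) := by
  refine or_iff_not_imp_left.2 fun h1 => ?_
  obtain ⟨p, k, m, hp, hm0, hpm, hn, hcard⟩ := exists_prime_pow_mul_card_divisors h0 h1
  rw [hcard] at h
  rcases eq_or_ne m 1 with rfl | hm1
  · rw [Nat.divisors_one, Finset.card_singleton] at h
    exact .inl ⟨p, k, hp, by omega, by simpa using hn⟩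
  right
  have hm : 1 < m.divisors.card := one_lt_card_divisors hm0 hm1
  obtain ⟨q, j, hq, rfl, hj⟩ :=
    exists_eq_prime_pow_of_card_divisors_le_three hm0 hm1 (by nlinarith)
  rw [hj] at h
  have hpq : p ≠ q := by
    rintro rfl
    exact hpm (dvd_pow_self p j.succ_ne_zero)
  have hexp : (k = 0 ∧ j = 0) ∨ (k = 0 ∧ j = 1) ∨ (k = 1 ∧ j = 0) := by
    have hk : k ≤ 1 := by nlinarith
    interval_cases k <;> omega
  have hform : n = p * q ∨ n = p * q ^ 2 ∨ n = p ^ 2 * q := by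
    rcases hexp with ⟨rfl, rfl⟩ | ⟨rfl, rfl⟩ | ⟨rfl, rfl⟩ <;> simp [hn]
  rcases hpq.lt_or_gt with hlt | hgt
  · exact ⟨p, q, hp, hq, hlt, hform⟩
  · refine ⟨q, p, hq, hp, hgt, ?_⟩
    rwa [mul_comm q p, mul_comm q (p ^ 2), mul_comm (q ^ 2) p, or_comm (a := n = p ^ 2 * q)]

end DivisorCount

lemma mul_mul_dvd_two_mul_of_coprime {n x a : ℕ} (hxa : x.Coprime a) (hx : x ∣ n)
    (hy : x + a ∣ n) (hz : x + 2 * a ∣ n) : x * (x + a) * (x + 2 * a) ∣ 2 * n := by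
  have hgcd : x.gcd (x + 2 * a) ∣ 2 := by
    rw [Nat.gcd_self_add_right, Nat.Coprime.gcd_mul_right_cancel_right 2 hxa.symm]
    exact Nat.gcd_dvd_right x 2
  have hxz : x * (x + 2 * a) ∣ 2 * n := by
    rw [← Nat.gcd_mul_lcm]
    exact mul_dvd_mul hgcd (Nat.lcm_dvd hx hz)
  have hyx : (x + a).Coprime x := by simpa using hxa.symm
  have hyz : (x + a).Coprime (x + 2 * a) := by
    rw [two_mul, ← add_assoc]
    simpa using hxa
  rw [mul_right_comm]
  exact (hyx.mul_right hyz).symm.mul_dvd_of_dvd_of_dvd hxz (hy.mul_left 2)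

/-- The arithmetic progression `d, d + a, …, d + (k - 1) * a` as a finite set. The term
`d + i * a` has index `i`, so indices run from `0` to `k - 1`. -/
def arithProg (d a k : ℕ) : Finset ℕ := (Finset.range k).image fun i => d + i * a

lemma mem_arithProg {d a k x : ℕ} : x ∈ arithProg d a k ↔ ∃ i < k, d + i * a = x := by
  simp [arithProg]

namespace arithProg

variable {n p a k : ℕ}

lemma term_mem_A (hA : A n = arithProg p a k) {i : ℕ} (hi : i < k) : p + i * a ∈ A n :=
  hA ▸ mem_arithProg.2 ⟨i, hi, rfl⟩

lemma term_dvd (hA : A n = arithProg p a k) {i : ℕ} (hi : i < k) : p + i * a ∣ n :=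
  (mem_A.1 (term_mem_A hA hi)).1

lemma first_le_of_mem_A (hA : A n = arithProg p a k) {x : ℕ} (hx : x ∈ A n) : p ≤ x := by
  obtain ⟨i, -, rfl⟩ := mem_arithProg.1 (hA ▸ hx)
  exact Nat.le_add_right p _

lemma first_mem_A (hA : A n = arithProg p a k) (hk : 0 < k) : p ∈ A n := by
  simpa using term_mem_A hA hk

lemma first_dvd (hA : A n = arithProg p a k) (hk : 0 < k) : p ∣ n :=
  (mem_A.1 (first_mem_A hA hk)).1

lemma le_sq_of_last_lt (hA : A n = arithProg p a (k + 1)) {d : ℕ} (hdn : d ∣ n)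
    (hd : p + k * a < d) : n ≤ d ^ 2 := by
  have hp : p ∈ A n := first_mem_A hA k.succ_pos
  have hd1 : 1 < d := by
    have := (mem_A.1 hp).2.1
    omega
  refine le_sq_of_notMem_A hdn hd1 fun hdA => ?_
  obtain ⟨i, hi, rfl⟩ := mem_arithProg.1 (hA ▸ hdA)
  have : i * a ≤ k * a := Nat.mul_le_mul_right a (by omega)
  omega

lemma first_le_of_dvd (hA : A n = arithProg p a k) (hk : 0 < k) {d : ℕ} (hdn : d ∣ n)
    (hd : 1 < d) : p ≤ d := by
  by_contra! hlt
  have hpsq : p ^ 2 < n := (mem_A.1 (first_mem_A hA hk)).2.2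
  have hdA : d ∈ A n := mem_A.2 ⟨hdn, hd, (Nat.pow_le_pow_left hlt.le 2).trans_lt hpsq⟩
  exact hlt.not_ge (first_le_of_mem_A hA hdA)

lemma first_prime (hA : A n = arithProg p a k) (hk : 0 < k) : p.Prime := by
  have hp : p ∈ A n := first_mem_A hA hk
  refine prime_of_mem_A hp fun y hy hyp => ?_
  exact (Nat.le_of_dvd (by have := (mem_A.1 hp).2.1; omega) hyp).antisymm (first_le_of_mem_A hA hy)

lemma exists_index_le_of_dvd_term (hA : A n = arithProg p a k) (ha : 0 < a) {i d : ℕ}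
    (hi : i < k) (hd : d ∣ p + i * a) (hd1 : 1 < d) : ∃ j ≤ i, p + j * a = d := by
  have hiA : p + i * a ∈ A n := term_mem_A hA hi
  obtain ⟨j, -, rfl⟩ := mem_arithProg.1 (hA ▸ mem_A_of_dvd hiA hd hd1)
  have hle : p + j * a ≤ p + i * a := Nat.le_of_dvd (by have := (mem_A.1 hiA).2.1; omega) hd
  exact ⟨j, Nat.le_of_mul_le_mul_right (Nat.le_of_add_le_add_left hle) ha, rfl⟩

lemma not_first_dvd_diff (hA : A n = arithProg p a k) (ha : 0 < a) (hk : 3 ≤ k) : ¬ p ∣ a := by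
  rintro ⟨c, rfl⟩
  have hp : 1 < p := (first_prime hA (by omega)).one_lt
  have hc : 0 < c := Nat.pos_of_mul_pos_left ha
  have hlt : c < p * c := by nlinarith
  -- The cofactor `1 + c` of the second term must be `p`; then the cofactor `2 p - 1` of the third
  -- term lies strictly between the first two terms `p` and `p ^ 2`.
  have hpc : p = 1 + c := by
    obtain ⟨j, hj, e⟩ := exists_index_le_of_dvd_term hA ha (i := 1) (d := 1 + c) (by omega)
      ⟨p, by ring⟩ (by omega)
    interval_cases j <;> omega
  obtain ⟨j, hj, e⟩ := exists_index_le_of_dvd_term hA ha (i := 2) (d := 1 + 2 * c) (by omega)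
    ⟨p, by ring⟩ (by omega)
  interval_cases j <;> omega

lemma coprime_first_diff (hA : A n = arithProg p a k) (ha : 0 < a) (hk : 3 ≤ k) : p.Coprime a :=
  (first_prime hA (by omega)).coprime_iff_not_dvd.2 (not_first_dvd_diff hA ha hk)

lemma first_dvd_term_iff (hA : A n = arithProg p a k) (ha : 0 < a) (hk : 3 ≤ k) (i : ℕ) :
    p ∣ p + i * a ↔ p ∣ i :=
  (Nat.dvd_add_right dvd_rfl).trans (coprime_first_diff hA ha hk).dvd_mul_right

lemma second_prime (hA : A n = arithProg p a k) (ha : 0 < a) (hk : 3 ≤ k) : (p + a).Prime := by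
  have hq : p + 1 * a ∈ A n := term_mem_A hA (by omega)
  rw [← one_mul a]
  refine prime_of_mem_A hq fun y hy hyq => ?_
  obtain ⟨j, hj, rfl⟩ := exists_index_le_of_dvd_term hA ha (by omega) hyq (mem_A.1 hy).2.1
  interval_cases j
  · rw [zero_mul, add_zero, first_dvd_term_iff hA ha hk, Nat.dvd_one] at hyq
    exact absurd hyq (first_prime hA (by omega)).ne_one
  · rfl

lemma third_prime (hA : A n = arithProg p a k) (ha : 0 < a) (hk : 3 ≤ k) (hp2 : 2 < p) :
    (p + 2 * a).Prime := by
  have hr : p + 2 * a ∈ A n := term_mem_A hA (by omega)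
  refine prime_of_mem_A hr fun y hy hyr => ?_
  obtain ⟨j, hj, rfl⟩ := exists_index_le_of_dvd_term hA ha (by omega) hyr (mem_A.1 hy).2.1
  interval_cases j
  · rw [zero_mul, add_zero, first_dvd_term_iff hA ha hk] at hyr
    exact absurd (Nat.le_of_dvd two_pos hyr) (by omega)
  · have hqa : p + 1 * a ∣ a := by
      rw [two_mul, ← add_assoc, one_mul] at hyr
      simpa using (Nat.dvd_add_right dvd_rfl).1 hyr
    exact absurd (Nat.le_of_dvd ha hqa) (by omega)
  · rfl

lemma first_mul_second_notMem_A (hA : A n = arithProg p a k) (ha : 0 < a) (hk : 3 ≤ k)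
    (hkp : k ≤ p) : p * (p + a) ∉ A n := by
  intro hmem
  obtain ⟨j, hj, e⟩ := mem_arithProg.1 (hA ▸ hmem)
  have hpj : p ∣ j := (first_dvd_term_iff hA ha hk j).1 (e ▸ dvd_mul_right p _)
  obtain rfl : j = 0 := Nat.eq_zero_of_dvd_of_lt hpj (by omega)
  nlinarith

lemma eq_mul_first_three_terms (hA : A n = arithProg p a k) (ha : 0 < a) (hk : 3 ≤ k)
    (hkp : k ≤ p) : n = p * (p + a) * (p + 2 * a) := by
  have hp : p.Prime := first_prime hA (by omega)
  have hq : (p + a).Prime := second_prime hA ha hk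
  have hr : (p + 2 * a).Prime := third_prime hA ha hk (by omega)
  have hpn : p ∣ n := first_dvd hA (by omega)
  have hqn : p + a ∣ n := by simpa using term_dvd hA (i := 1) (by omega)
  have hrn : p + 2 * a ∣ n := term_dvd hA (by omega)
  have hpq : p.Coprime (p + a) := (Nat.coprime_primes hp hq).2 (by omega)
  have hpr : p.Coprime (p + 2 * a) := (Nat.coprime_primes hp hr).2 (by omega)
  have hqr : (p + a).Coprime (p + 2 * a) := (Nat.coprime_primes hq hr).2 (by omega)
  have hpqn : p * (p + a) ∣ n := hpq.mul_dvd_of_dvd_of_dvd hpn hqn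
  obtain ⟨s, hs⟩ := (hpr.mul_left hqr).mul_dvd_of_dvd_of_dvd hpqn hrn
  have hn : n ≤ (p * (p + a)) ^ 2 :=
    le_sq_of_notMem_A hpqn (by nlinarith [hp.one_lt]) (first_mul_second_notMem_A hA ha hk hkp)
  suffices s = 1 by rw [hs, this, mul_one]
  by_contra hs1
  have hs0 : s ≠ 0 := by
    rintro rfl
    exact (pos_of_mem_A (first_mem_A hA (by omega))).ne' hs
  have hps : p ≤ s := first_le_of_dvd hA (by omega) (Dvd.intro_left _ hs.symm) (by omega)
  have hlt : p * (p + a) < (p + 2 * a) * s := by nlinarith [hp.pos]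
  refine hn.not_gt ?_
  calc (p * (p + a)) ^ 2 = p * (p + a) * (p * (p + a)) := sq _
    _ < p * (p + a) * ((p + 2 * a) * s) :=
        Nat.mul_lt_mul_of_pos_left hlt (Nat.mul_pos hp.pos hq.pos)
    _ = n := by rw [hs, mul_assoc (p * (p + a))]

lemma first_eq_diff_add_one (hA : A n = arithProg p a k) (ha : 0 < a) (hpk : p < k) :
    p = a + 1 := by
  have hp : 1 < p := (first_prime hA (by omega)).one_lt
  obtain ⟨j, -, e⟩ := exists_index_le_of_dvd_term hA ha (d := 1 + a) hpk ⟨p, by ring⟩ (by omega)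
  rcases Nat.eq_zero_or_pos j with rfl | hj
  · omega
  · nlinarith

lemma diff_le_two (hA : A n = arithProg (a + 1) a k) (hk : a + 1 < k) : a ≤ 2 := by
  by_contra! ha
  obtain ⟨c, rfl⟩ := Nat.exists_eq_add_of_le' ha
  have hsq : c + 3 + 1 + c * (c + 3) = (c + 2) ^ 2 := by ring
  have hmem : (c + 2) ^ 2 ∈ A n := hsq ▸ term_mem_A hA (by omega)
  have hdvd : c + 2 ∣ n := (dvd_pow_self _ two_ne_zero).trans (mem_A.1 hmem).1
  have := first_le_of_dvd hA (by omega) hdvd (by omega)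
  omega

lemma le_sq_first_mul_last (hA : A n = arithProg p a (k + 3)) (ha : 0 < a) :
    n ≤ (p * (p + (k + 2) * a)) ^ 2 := by
  have hp : p.Prime := first_prime hA (by omega)
  have hpn : p ∣ n := first_dvd hA (by omega)
  -- `p` cannot divide two consecutive indices, so it is coprime to one of the last two terms.
  obtain ⟨i, hki, hik, hpi⟩ : ∃ i, k + 1 ≤ i ∧ i ≤ k + 2 ∧ ¬ p ∣ i := by
    by_cases h : p ∣ k + 1
    · exact ⟨k + 2, by omega, le_rfl, fun h' => hp.not_dvd_one ((Nat.dvd_add_right h).1 h')⟩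
    · exact ⟨k + 1, le_rfl, by omega, h⟩
  have hin : p + i * a ∣ n := term_dvd hA (by omega)
  have hcop : p.Coprime (p + i * a) :=
    hp.coprime_iff_not_dvd.2 ((first_dvd_term_iff hA ha (by omega) i).not.2 hpi)
  have hlast : p + (k + 2) * a < p * (p + i * a) := by
    nlinarith [hp.two_le, Nat.mul_le_mul_right a hki, Nat.mul_le_mul_right (p + i * a) hp.two_le]
  calc n ≤ (p * (p + i * a)) ^ 2 :=
        le_sq_of_last_lt hA (hcop.mul_dvd_of_dvd_of_dvd hpn hin) hlast
    _ ≤ (p * (p + (k + 2) * a)) ^ 2 := by gcongr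

lemma last_three_terms_le (hA : A n = arithProg p a (k + 3)) (ha : 0 < a) :
    (p + k * a) * (p + (k + 1) * a) ≤ 2 * p ^ 2 * (p + (k + 2) * a) := by
  have hp : p.Prime := first_prime hA (by omega)
  have hcop : (p + k * a).Coprime a := by simpa using coprime_first_diff hA ha (by omega)
  have hy : p + (k + 1) * a = p + k * a + a := by ring
  have hz : p + (k + 2) * a = p + k * a + 2 * a := by ring
  have hdvd := mul_mul_dvd_two_mul_of_coprime hcop (term_dvd hA (i := k) (by omega))
    (hy ▸ term_dvd hA (i := k + 1) (by omega)) (hz ▸ term_dvd hA (i := k + 2) (by omega))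
  rw [← hy, ← hz] at hdvd
  have hn : 0 < n := pos_of_mem_A (first_mem_A hA (by omega))
  refine Nat.le_of_mul_le_mul_right ?_ (Nat.add_pos_left hp.pos ((k + 2) * a))
  calc (p + k * a) * (p + (k + 1) * a) * (p + (k + 2) * a)
      ≤ 2 * n := Nat.le_of_dvd (by omega) hdvd
    _ ≤ 2 * (p * (p + (k + 2) * a)) ^ 2 := Nat.mul_le_mul_left 2 (le_sq_first_mul_last hA ha)
    _ = 2 * p ^ 2 * (p + (k + 2) * a) * (p + (k + 2) * a) := by ring

lemma eq_of_A_eq_two_one (hA : A n = arithProg 2 1 (k + 3)) :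
    n = 24 ∨ n = 36 ∨ n = 60 := by
  have hterm : ∀ x, 2 ≤ x → x < k + 5 → x ∣ n ∧ x ^ 2 < n := by
    intro x hx hxk
    obtain ⟨i, rfl⟩ := Nat.exists_eq_add_of_le hx
    have := mem_A.1 (term_mem_A hA (i := i) (by omega))
    exact ⟨by simpa using this.1, by simpa using this.2.2⟩
  have hbig : ∀ x, x ∣ n → k + 5 ≤ x → n ≤ x ^ 2 := fun x hxn hx =>
    le_sq_of_last_lt hA hxn (by omega)
  have hk : k ≤ 6 := by
    have := last_three_terms_le hA one_pos
    nlinarith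
  have hn : n ≤ 20 ^ 2 := (le_sq_first_mul_last hA one_pos).trans <|
    Nat.pow_le_pow_left (by omega) 2
  obtain ⟨h3, -⟩ := hterm 3 (by omega) (by omega)
  obtain ⟨h4, h4sq⟩ := hterm 4 (by omega) (by omega)
  rcases Nat.eq_zero_or_pos k with rfl | hk0
  · have : n ≤ 6 ^ 2 := hbig 6 (by omega) (by omega)
    omega
  right; right
  obtain ⟨h5, -⟩ := hterm 5 (by omega) (by omega)
  have hk2 : k ≤ 2 := by
    by_contra! hk3
    obtain ⟨h7, -⟩ := hterm 7 (by omega) (by omega)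
    omega
  have : n ≤ 10 ^ 2 := hbig 10 (by omega) (by omega)
  omega

lemma A_ne_three_two : A n ≠ arithProg 3 2 (k + 4) := by
  intro hA
  have h9sq : 9 ^ 2 < n := (mem_A.1 (term_mem_A hA (i := 3) (by omega))).2.2
  have hk : k ≤ 7 := by
    have := last_three_terms_le hA two_pos
    nlinarith
  have hn : n ≤ 69 ^ 2 := (le_sq_first_mul_last hA two_pos).trans <|
    Nat.pow_le_pow_left (by omega) 2
  have h5 : 5 ∣ n := term_dvd hA (i := 1) (by omega)
  have h7 : 7 ∣ n := term_dvd hA (i := 2) (by omega)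
  have h9 : 9 ∣ n := term_dvd hA (i := 3) (by omega)
  have hk3 : 3 ≤ k := by
    by_contra! hlt
    have : n ≤ 15 ^ 2 := le_sq_of_last_lt hA (by omega) (by omega)
    omega
  have h11 : 11 ∣ n := term_dvd hA (i := 4) (by omega)
  have h13 : 13 ∣ n := term_dvd hA (i := 5) (by omega)
  omega

lemma eq_of_A_eq_of_first_lt (hA : A n = arithProg p a k) (ha : 0 < a) (hk : 3 ≤ k)
    (hpk : p < k) : n = 24 ∨ n = 36 ∨ n = 60 := by
  obtain rfl : p = a + 1 := first_eq_diff_add_one hA ha hpk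
  have ha2 : a ≤ 2 := diff_le_two hA hpk
  interval_cases a
  · obtain ⟨j, rfl⟩ := Nat.exists_eq_add_of_le' hk
    exact eq_of_A_eq_two_one hA
  · obtain ⟨j, rfl⟩ := Nat.exists_eq_add_of_le' hpk
    exact absurd hA A_ne_three_two

end arithProg

theorem statement_1 (n : ℕ) (hn : 0 < n) (h : IsAP (A n)) :
    n = 1 ∨
    (∃ p : ℕ, p.Prime ∧
      (n = p ∨ n = p ^ 2 ∨ n = p ^ 3 ∨ n = p ^ 4 ∨ n = p ^ 5 ∨ n = p ^ 6)) ∨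
    (∃ p q : ℕ, p.Prime ∧ q.Prime ∧ p < q ∧
      (n = p * q ∨ n = p * q ^ 2 ∨ n = p ^ 2 * q)) ∨
    (∃ p q r : ℕ, p.Prime ∧ q.Prime ∧ r.Prime ∧ p < q ∧ q < r ∧
      2 * q = p + r ∧ n = p * q * r) ∨
    n = 24 ∨ n = 36 ∨ n = 60 := by
  obtain ⟨d, a, -, ha, (hA : A n = arithProg d a (A n).card)⟩ := h
  by_cases hcard : (A n).card ≤ 2
  · have hdiv : n.divisors.card ≤ 7 :=
      (card_divisors_le_two_mul_card_A_add_three n).trans (by omega)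
    rcases eq_one_or_prime_pow_or_two_primes_of_card_divisors_le_seven hn.ne' hdiv with
      h1 | ⟨p, k, hp, hk, hpow⟩ | htwo
    · exact .inl h1
    · exact .inr (.inl ⟨p, hp, by interval_cases k <;> simp [hpow]⟩)
    · exact .inr (.inr (.inl htwo))
  · have hk : 3 ≤ (A n).card := by omega
    refine .inr (.inr (.inr ?_))
    rcases lt_or_ge d (A n).card with hlt | hge
    · exact .inr (arithProg.eq_of_A_eq_of_first_lt hA ha hk hlt)
    · exact .inl ⟨d, d + a, d + 2 * a, arithProg.first_prime hA (by omega),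
        arithProg.second_prime hA ha hk, arithProg.third_prime hA ha hk (by omega),
        by omega, by omega, by ring,
        arithProg.eq_mul_first_three_terms hA ha hk hge⟩
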